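/- arXiv:1603.08542 — 2 statements merged into one kernel-verified Lean document; each statement's English description precedes it below -/
import Mathlib

section
/- Among all ellipses of the form x²/a² + (y − b)²/b² = 1 (with a, b > 0) inscribed in the closed unit semicircular region {(x, y) : x² + y² ≤ 1, y ≥ 0}, the area is at most 2√3·π/9: if every point (x, y) satisfying x²/a² + (y − b)²/b² = 1 also satisfies x² + y² ≤ 1, then π·a·b ≤ 2√3·π/9, with equality if and only if a = √6/3 and b = √2/3. -/
/-- Among all ellipses x²/a² + (y−b)²/b² = 1 inscribed in the closed unit semicircular region,
the area π·a·b is at most 2√3·π/9, with equality iff a = √6/3 and b = √2/3. -/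
theorem inscribed_ellipse_max_area (a b : ℝ) (ha : 0 < a) (hb : 0 < b)
    (hins : ∀ x y : ℝ, x ^ 2 / a ^ 2 + (y - b) ^ 2 / b ^ 2 = 1 → x ^ 2 + y ^ 2 ≤ 1) :
    Real.pi * a * b ≤ 2 * Real.sqrt 3 * Real.pi / 9 ∧
      (Real.pi * a * b = 2 * Real.sqrt 3 * Real.pi / 9 ↔
        a = Real.sqrt 6 / 3 ∧ b = Real.sqrt 2 / 3) := by
  have h3 : Real.sqrt 3 ^ 2 = 3 := Real.sq_sqrt (by norm_num)
  have h2 : Real.sqrt 2 ^ 2 = 2 := Real.sq_sqrt (by norm_num)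
  have p3 : 0 < Real.sqrt 3 := Real.sqrt_pos.mpr (by norm_num)
  have p2 : 0 < Real.sqrt 2 := Real.sqrt_pos.mpr (by norm_num)
  have h6 : Real.sqrt 6 = Real.sqrt 3 * Real.sqrt 2 := by
    rw [← Real.sqrt_mul (by norm_num)]; norm_num
  have hpi := Real.pi_pos
  have key : (a * Real.sqrt 3 / 2) ^ 2 + (3 * b / 2) ^ 2 ≤ 1 := by
    apply hins
    have e1 : (a * Real.sqrt 3 / 2) ^ 2 = 3 / 4 * a ^ 2 := by
      rw [div_pow, mul_pow, h3]; ring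
    rw [e1]
    field_simp
    ring
  rw [h6]
  generalize Real.sqrt 3 = s at *
  generalize Real.sqrt 2 = t at *
  have key2 : 3 / 4 * a ^ 2 + 9 / 4 * b ^ 2 ≤ 1 := by
    have : (a * s / 2) ^ 2 = 3 / 4 * a ^ 2 := by rw [div_pow, mul_pow, h3]; ring
    rw [this] at key
    linarith
  have e : (a - s * b) ^ 2 = a ^ 2 - 2 * s * (a * b) + 3 * b ^ 2 := by rw [← h3]; ring
  have hsab : s * (a * b) ≤ 2 / 3 := by nlinarith [sq_nonneg (a - s * b)]
  have hab : a * b ≤ 2 * s / 9 := by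
    have : s * (s * (a * b)) ≤ s * (2 / 3) := mul_le_mul_of_nonneg_left hsab p3.le
    have h : s * (s * (a * b)) = 3 * (a * b) := by rw [← h3]; ring
    linarith
  refine ⟨?_, ?_, ?_⟩
  · have := mul_le_mul_of_nonneg_left hab hpi.le
    linarith
  · intro h
    have hab' : a * b = 2 * s / 9 := by
      apply mul_left_cancel₀ hpi.ne'
      linarith
    have h1 : s * (a * b) = 2 / 3 := by rw [hab']; linarith
    have h0 : a - s * b = 0 := by
      apply pow_eq_zero_iff (two_ne_zero) |>.mp
      nlinarith [sq_nonneg (a - s * b)]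
    have ea : a = s * b := by linarith
    have hb2 : b ^ 2 = (t / 3) ^ 2 := by
      have : s * (a * b) = 3 * b ^ 2 := by rw [ea, ← h3]; ring
      rw [div_pow, h2]; linarith
    have eb : b = t / 3 := by
      exact (pow_left_inj₀ hb.le (by positivity) two_ne_zero).mp hb2
    exact ⟨by rw [ea, eb]; ring, eb⟩
  · rintro ⟨rfl, rfl⟩
    have : Real.pi * (s * t / 3) * (t / 3) = Real.pi * s * t ^ 2 / 9 := by ring
    rw [this, h2]; ring
end

section
/- The optimal inscribed ellipse meets the unit circle exactly at the vertices of the optimal inscribed rectangle: for real numbers x, y, the pair of equations x²/(6/9) + (y − √2/3)²/(2/9) = 1 and x² + y² = 1 holds simultaneously if and only if y = √2/2 and (x = √2/2 or x = −√2/2). -/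
/-- The optimal inscribed ellipse meets the unit circle exactly at the vertices of the
optimal inscribed rectangle. -/
theorem ellipse_circle_intersection (x y : ℝ) :
    (x ^ 2 / (6 / 9) + (y - Real.sqrt 2 / 3) ^ 2 / (2 / 9) = 1 ∧ x ^ 2 + y ^ 2 = 1) ↔
      (y = Real.sqrt 2 / 2 ∧ (x = Real.sqrt 2 / 2 ∨ x = -(Real.sqrt 2 / 2))) := by
  have hs : Real.sqrt 2 ^ 2 = 2 := Real.sq_sqrt (by norm_num)
  generalize Real.sqrt 2 = s at *
  constructor
  · rintro ⟨h1, h2⟩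
    have h3 : (y - s / 2) ^ 2 = 0 := by linarith
    have hy : y = s / 2 := by
      have := pow_eq_zero_iff (two_ne_zero) |>.1 h3
      linarith
    refine ⟨hy, sq_eq_sq_iff_eq_or_eq_neg.1 ?_⟩
    subst hy
    linarith
  · rintro ⟨rfl, rfl | rfl⟩ <;> constructor <;> linarith
end
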